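/- For every real G>0, one has y₀(G) ≥ 2G; consequently the discriminant of the quadratic x² − √(2y₀(G))·x + (y₀(G) − G + G/√(2y₀(G))) is negative, i.e. −2y₀(G) + 4G − 4G/√(2y₀(G)) < 0, and this quadratic is strictly positive for every real x (it has no real roots). -/

import Mathlib

/-- z₀(G) = 32G³+27G²+3√3·√(27G⁴+64G⁵). -/
noncomputable def z₀ (G : ℝ) : ℝ :=
  32 * G ^ 3 + 27 * G ^ 2 + 3 * Real.sqrt 3 * Real.sqrt (27 * G ^ 4 + 64 * G ^ 5)

/-- z₁(G) = 2^{5/3}·G·z₀(G)^{−1/3}. -/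
noncomputable def z₁ (G : ℝ) : ℝ :=
  (2 : ℝ) ^ ((5 : ℝ) / 3) * G * (z₀ G) ^ (-(1 : ℝ) / 3)

/-- y₀(G) = (2G/3)·(1+z₁(G)+z₁(G)⁻¹), a root of the resolvent cubic. -/
noncomputable def y₀ (G : ℝ) : ℝ :=
  (2 * G / 3) * (1 + z₁ G + (z₁ G)⁻¹)

/-- The quartic P_G(k)=k⁴−2Gk²+2Gk+G² determining the critical frequencies. -/
noncomputable def P (G k : ℝ) : ℝ :=
  k ^ 4 - 2 * G * k ^ 2 + 2 * G * k + G ^ 2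

/-- The discriminant D(G)=−2y₀(G)+4G+4G/√(2y₀(G)). -/
noncomputable def Dd (G : ℝ) : ℝ :=
  -2 * y₀ G + 4 * G + 4 * G / Real.sqrt (2 * y₀ G)

/-- The critical frequency closer to the origin, ω̃₊(G)=(−√(2y₀(G))+√(D(G)))/2. -/
noncomputable def ωp (G : ℝ) : ℝ :=
  (-Real.sqrt (2 * y₀ G) + Real.sqrt (Dd G)) / 2

/-- The critical frequency farther from the origin, ω̃₋(G)=(−√(2y₀(G))−√(D(G)))/2. -/
noncomputable def ωm (G : ℝ) : ℝ :=
  (-Real.sqrt (2 * y₀ G) - Real.sqrt (Dd G)) / 2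

/-- The focusing-condition function f(V)=−(3/2)·V·ω̃₊(1/V)³−1. -/
noncomputable def fV (V : ℝ) : ℝ :=
  -(3 / 2) * V * (ωp (1 / V)) ^ 3 - 1

theorem two_le_add_inv {K : Type*} [Field K] [LinearOrder K] [IsStrictOrderedRing K] {a : K}
    (ha : 0 < a) : 2 ≤ a + a⁻¹ := by
  simpa using two_mul_le_add_mul_sq (a := 1) (b := 1) ha

theorem quadratic_pos_of_discrim_neg {R : Type*} [CommRing R] [LinearOrder R]
    [IsStrictOrderedRing R] {a b c : R} (ha : 0 < a) (h : discrim a b c < 0) (x : R) :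
    0 < a * (x * x) + b * x + c := by
  have complete_square :
      4 * a * (a * (x * x) + b * x + c) = (2 * a * x + b) ^ 2 - discrim a b c := by
    rw [discrim]
    ring
  have scaled_pos : 0 < 4 * a * (a * (x * x) + b * x + c) := by
    rw [complete_square]
    exact sub_pos.mpr (h.trans_le (sq_nonneg _))
  exact pos_of_mul_pos_right scaled_pos (by positivity)

theorem discrim_resolvent_factor (G : ℝ) {y : ℝ} (hy : 0 ≤ y) :
    discrim 1 (-√(2 * y)) (y - G + G / √(2 * y)) = -2 * y + 4 * G - 4 * G / √(2 * y) := by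
  have sqrt_sq : √(2 * y) ^ 2 = 2 * y := Real.sq_sqrt (by positivity)
  rw [discrim]
  linear_combination sqrt_sq

theorem discrim_resolvent_factor_neg {G y : ℝ} (hG : 0 < G) (hy : 2 * G ≤ y) :
    discrim 1 (-√(2 * y)) (y - G + G / √(2 * y)) < 0 := by
  have y_pos : 0 < y := by linarith
  have correction_pos : 0 < 4 * G / √(2 * y) := by positivity
  rw [discrim_resolvent_factor G y_pos.le]
  linarith

section ResolventRoot

variable {G : ℝ}

theorem z₀_pos (hG : 0 < G) : 0 < z₀ G := by
  unfold z₀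
  positivity

theorem z₁_pos (hG : 0 < G) : 0 < z₁ G := by
  have := z₀_pos hG
  unfold z₁
  positivity

theorem two_mul_le_y₀ (hG : 0 < G) : 2 * G ≤ y₀ G :=
  calc
    2 * G = 2 * G / 3 * (1 + 2) := by ring
    _ ≤ 2 * G / 3 * (1 + (z₁ G + (z₁ G)⁻¹)) := by
      gcongr
      exact two_le_add_inv (z₁_pos hG)
    _ = y₀ G := by rw [y₀, add_assoc]

end ResolventRoot

/-- For G>0, y₀(G) ≥ 2G; hence the discriminant of x²−√(2y₀)x+(y₀−G+G/√(2y₀)) is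
negative and this quadratic is strictly positive for every real x. -/
theorem first_quadratic_no_real_roots (G : ℝ) (hG : 0 < G) :
    2 * G ≤ y₀ G ∧
      -2 * y₀ G + 4 * G - 4 * G / Real.sqrt (2 * y₀ G) < 0 ∧
      ∀ x : ℝ, 0 < x ^ 2 - Real.sqrt (2 * y₀ G) * x
        + (y₀ G - G + G / Real.sqrt (2 * y₀ G)) := by
  have hy : 2 * G ≤ y₀ G := two_mul_le_y₀ hG
  have hdiscrim : discrim 1 (-√(2 * y₀ G)) (y₀ G - G + G / √(2 * y₀ G)) < 0 :=
    discrim_resolvent_factor_neg hG hy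
  refine ⟨hy, ?_, fun x ↦ ?_⟩
  · rwa [← discrim_resolvent_factor G (by linarith)]
  · calc
      0 < 1 * (x * x) + -√(2 * y₀ G) * x + (y₀ G - G + G / √(2 * y₀ G)) :=
        quadratic_pos_of_discrim_neg one_pos hdiscrim x
      _ = _ := by ring
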